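/- In the homogeneous BARSS nearest-distance setup described in the context with K = 2 tiers and each G_i strictly decreasing, assume β₁·P₁·G₁(0) ≤ β₂·P₂·G₂(0) and set u* = G₂^{-1}( (β₁·P₁/(β₂·P₂))·G₁(0) ). Then the conditional density f₁ of the connection distance given association with tier 1 satisfies p₁*·f₁(u) = 2π·λ₁·u·exp( −π·( λ₁·u² + λ₂·(Q₂^{(1)}(u))² ) ) for all u ≥ 0, and the conditional density f₂ given association with tier 2 satisfies p₂*·f₂(u) = 2π·λ₂·u·e^{−π·λ₂·u²} for 0 ≤ u < u* and p₂*·f₂(u) = 2π·λ₂·u·exp( −π·( λ₂·u² + λ₁·(Q₁^{(2)}(u))² ) ) for u ≥ u*, where 'conditional density' means P(R_k ≤ r and A* = k) = ∫₀^r p_k*·f_k(u) du for all r ≥ 0. -/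

import Mathlib

open MeasureTheory ProbabilityTheory
open scoped ProbabilityTheory ENNReal

/-!
For `y > 0`, the generalized inverse of a path-loss function satisfies the Galois-type equivalence
`G⁻¹(y) ≤ t ↔ G t ≤ y`, so association with tier `k` is the event `Q(R_k) ≤ R_i`, where
`Q = Q_i^{(k)}` is nondecreasing. Conditioning on `R_k`, whose density is minus the derivative of
its survival function, and inserting the survival function of `R_i` gives the density of `R_k` on
this event. The same equivalence turns `u < u*` into `β₁ P₁ G₁(0) < β₂ P₂ G₂(u)`: for such `u` the
argument of `G₁⁻¹` exceeds `G₁(0)`, and `Q₁^{(2)}` vanishes.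
-/

section PathLoss

open Set

/-- A path-loss function on `[0, ∞)`: continuous, nonincreasing, strictly positive and vanishing at
infinity. Its values on negative arguments are left unconstrained. -/
structure IsPathLoss (G : ℝ → ℝ) : Prop where
  continuousOn : ContinuousOn G (Ici 0)
  antitoneOn : AntitoneOn G (Ici 0)
  pos : ∀ x, 0 ≤ x → 0 < G x
  tendsto_atTop : Filter.Tendsto G Filter.atTop (nhds 0)

/-- `Ginv` is the generalized inverse of the path-loss function `G`, through which the association
event is expressed by distances. Its values on `(-∞, 0]` are left unconstrained. -/
structure IsPathLossInverse (Ginv G : ℝ → ℝ) : Prop where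
  eq_sInf : ∀ y, 0 < y → y ≤ G 0 → Ginv y = sInf {x | 0 ≤ x ∧ G x = y}
  eq_zero : ∀ y, G 0 < y → Ginv y = 0

variable {G Ginv : ℝ → ℝ} {y t : ℝ}

lemma IsPathLoss.isLeast_sInf_level (hG : IsPathLoss G) (hy : 0 < y) (hyG : y ≤ G 0) :
    IsLeast {x | 0 ≤ x ∧ G x = y} (sInf {x | 0 ≤ x ∧ G x = y}) := by
  obtain ⟨b, hGb, hb⟩ := ((hG.tendsto_atTop.eventually (gt_mem_nhds hy)).and
    (Filter.eventually_ge_atTop 0)).exists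
  obtain ⟨x, hx, hGx⟩ := intermediate_value_Icc' hb (hG.continuousOn.mono Icc_subset_Ici_self)
    ⟨hGb.le, hyG⟩
  have hbdd : BddBelow {x | 0 ≤ x ∧ G x = y} := ⟨0, fun _ h => h.1⟩
  have hclosed : IsClosed {x | 0 ≤ x ∧ G x = y} :=
    hG.continuousOn.preimage_isClosed_of_isClosed isClosed_Ici (isClosed_singleton (x := y))
  exact ⟨hclosed.csInf_mem ⟨x, hx.1, hGx⟩ hbdd, fun _ h => csInf_le hbdd h⟩

lemma IsPathLossInverse.nonneg (h : IsPathLossInverse Ginv G) (hy : 0 < y) : 0 ≤ Ginv y := by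
  rcases le_or_gt y (G 0) with hyG | hyG
  · rw [h.eq_sInf y hy hyG]
    exact Real.sInf_nonneg fun _ hx => hx.1
  · exact (h.eq_zero y hyG).ge

lemma IsPathLossInverse.le_iff (h : IsPathLossInverse Ginv G) (hG : IsPathLoss G)
    (hy : 0 < y) (ht : 0 ≤ t) : Ginv y ≤ t ↔ G t ≤ y := by
  rcases le_or_gt y (G 0) with hyG | hyG
  · obtain ⟨⟨hnonneg, hlevel⟩, hleast⟩ := hG.isLeast_sInf_level hy hyG
    rw [← h.eq_sInf y hy hyG] at hnonneg hlevel hleast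
    refine ⟨fun hle => hlevel ▸ hG.antitoneOn hnonneg ht hle, fun hle => ?_⟩
    by_contra! hlt
    exact hlt.not_ge <| hleast
      ⟨ht, hle.antisymm (hlevel.ge.trans (hG.antitoneOn ht hnonneg hlt.le))⟩
  · rw [h.eq_zero y hyG]
    exact iff_of_true ht ((hG.antitoneOn self_mem_Ici ht ht).trans hyG.le)

lemma IsPathLossInverse.antitoneOn (h : IsPathLossInverse Ginv G) (hG : IsPathLoss G) :
    AntitoneOn Ginv (Ioi 0) := fun _ hy _ hz hyz =>
  (h.le_iff hG hz (h.nonneg hy)).2 <| ((h.le_iff hG hy (h.nonneg hy)).1 le_rfl).trans hyz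

variable {H Hinv : ℝ → ℝ} {a b u : ℝ}

lemma IsPathLossInverse.div_mul_le_iff (h : IsPathLossInverse Ginv G) (hG : IsPathLoss G)
    (ha : 0 < a) (hb : 0 < b) (hy : 0 < y) (ht : 0 ≤ t) :
    Ginv (a / b * y) ≤ t ↔ b * G t ≤ a * y := by
  rw [h.le_iff hG (by positivity) ht, div_mul_eq_mul_div, le_div_iff₀' hb]

lemma IsPathLossInverse.monotoneOn_comp (h : IsPathLossInverse Ginv G) (hG : IsPathLoss G)
    (hH : IsPathLoss H) (ha : 0 < a) (hb : 0 < b) :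
    MonotoneOn (fun u => Ginv (a / b * H u)) (Ici 0) := fun u hu v hv huv =>
  h.antitoneOn hG (mul_pos (div_pos ha hb) (hH.pos v hv)) (mul_pos (div_pos ha hb) (hH.pos u hu))
    (mul_le_mul_of_nonneg_left (hH.antitoneOn hu hv huv) (by positivity))

lemma IsPathLossInverse.eq_zero_of_lt (hHinv : IsPathLossInverse Hinv H) (hH : IsPathLoss H)
    (hGinv : IsPathLossInverse Ginv G) (hG : IsPathLoss G) (ha : 0 < a) (hb : 0 < b)
    (hu : 0 ≤ u) (hlt : u < Ginv (a / b * H 0)) : Hinv (b / a * G u) = 0 := by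
  refine hHinv.eq_zero _ ?_
  rw [div_mul_eq_mul_div, lt_div_iff₀' ha]
  exact not_le.1 fun hle =>
    hlt.not_ge ((hGinv.div_mul_le_iff hG ha hb (hH.pos 0 le_rfl) hu).2 hle)

end PathLoss

section Probability

open Set

variable {Ω : Type*} [MeasurableSpace Ω] {μ : Measure Ω} {X Y : Ω → ℝ}

lemma lintegral_Ioi_ofReal_of_hasDerivAt_neg {S f : ℝ → ℝ} {a : ℝ}
    (hS : ∀ x ∈ Ici a, HasDerivAt S (-f x) x) (hf : ∀ x ∈ Ioi a, 0 ≤ f x)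
    (hlim : Filter.Tendsto S Filter.atTop (nhds 0)) :
    ∫⁻ x in Ioi a, ENNReal.ofReal (f x) = ENNReal.ofReal (S a) := by
  have hderiv : ∀ x ∈ Ici a, HasDerivAt (fun x => -S x) (f x) x := fun x hx => by
    simpa using (hS x hx).fun_neg
  have hlim_neg : Filter.Tendsto (fun x => -S x) Filter.atTop (nhds 0) := by
    simpa using hlim.neg
  rw [← ofReal_integral_eq_lintegral_ofReal
      (integrableOn_Ioi_deriv_of_nonneg' hderiv hf hlim_neg)
      ((ae_restrict_iff' measurableSet_Ioi).2 (Filter.Eventually.of_forall hf)),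
    integral_Ioi_of_hasDerivAt_of_nonneg' hderiv hf hlim_neg, zero_sub, neg_neg]

lemma map_eq_withDensity_of_hasDerivAt_survival [IsFiniteMeasure μ] {S f : ℝ → ℝ}
    (hX : Measurable X) (hX_nonneg : 0 ≤ᵐ[μ] X)
    (hsurv : ∀ r, 0 ≤ r → μ {ω | r ≤ X ω} = ENNReal.ofReal (S r))
    (hS : ∀ r, 0 ≤ r → HasDerivAt S (-f r) r) (hf : ∀ r, 0 < r → 0 ≤ f r)
    (hlim : Filter.Tendsto S Filter.atTop (nhds 0)) :
    μ.map X = (volume.restrict (Ioi 0)).withDensity fun u => ENNReal.ofReal (f u) := by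
  refine Measure.ext_of_Ici _ _ fun a => ?_
  have hmap : μ {ω | a ≤ X ω} = μ {ω | a ⊔ 0 ≤ X ω} := by
    refine measure_congr (Filter.eventuallyEq_set.2 ?_)
    filter_upwards [hX_nonneg] with ω hω
    exact ⟨fun h => sup_le h hω, fun h => le_sup_left.trans h⟩
  have hset : (Ici a ∩ Ioi 0 : Set ℝ) =ᵐ[volume] Ioi (a ⊔ 0) := by
    rw [← Ioi_inter_Ioi]
    exact Ioi_ae_eq_Ici.symm.inter Filter.EventuallyEq.rfl
  rw [Measure.map_apply hX measurableSet_Ici, withDensity_apply _ measurableSet_Ici,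
    Measure.restrict_restrict measurableSet_Ici, setLIntegral_congr hset,
    lintegral_Ioi_ofReal_of_hasDerivAt_neg (fun x hx => hS x (le_sup_right.trans hx))
      (fun x hx => hf x (le_sup_right.trans_lt hx)) hlim, ← hsurv _ le_sup_right, ← hmap]
  rfl

lemma antitone_measure_setOf_le (μ : Measure Ω) (Y : Ω → ℝ) :
    Antitone fun r => μ {ω | r ≤ Y ω} :=
  fun _ _ hrs => measure_mono fun _ hω => hrs.trans hω

lemma measure_mem_and_comp_le_of_indepFun [IsFiniteMeasure μ] {α : Type*} [MeasurableSpace α]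
    {X : Ω → α} {q : α → ℝ} {s : Set α} (hX : Measurable X) (hY : Measurable Y)
    (hXY : IndepFun X Y μ) (hq : AEMeasurable q (μ.map X)) (hs : MeasurableSet s) :
    μ {ω | X ω ∈ s ∧ q (X ω) ≤ Y ω} = ∫⁻ x in s, μ {ω | q x ≤ Y ω} ∂μ.map X := by
  wlog hq_meas : Measurable q generalizing q
  · have hmk := this hq.measurable_mk.aemeasurable hq.measurable_mk
    rw [setLIntegral_congr_fun_ae hs
      (hq.ae_eq_mk.mono fun x hx _ => by rw [hx]), ← hmk]
    refine measure_congr (Filter.eventuallyEq_set.2 ?_)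
    filter_upwards [ae_of_ae_map hX.aemeasurable hq.ae_eq_mk] with ω hω
    rw [hω]
  have hT : MeasurableSet {p : α × ℝ | p.1 ∈ s ∧ q p.1 ≤ p.2} :=
    (measurable_fst hs).inter (measurableSet_le (hq_meas.comp measurable_fst) measurable_snd)
  have hslice : ∀ x, μ.map Y (Prod.mk x ⁻¹' {p : α × ℝ | p.1 ∈ s ∧ q p.1 ≤ p.2}) =
      s.indicator (fun x => μ {ω | q x ≤ Y ω}) x := fun x => by
    rw [Measure.map_apply hY (measurable_prodMk_left hT)]
    by_cases hx : x ∈ s <;> simp [hx]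
  calc μ {ω | X ω ∈ s ∧ q (X ω) ≤ Y ω}
      = μ.map (fun ω => (X ω, Y ω)) {p | p.1 ∈ s ∧ q p.1 ≤ p.2} :=
        (Measure.map_apply (hX.prodMk hY) hT).symm
    _ = ∫⁻ x, s.indicator (fun x => μ {ω | q x ≤ Y ω}) x ∂μ.map X := by
        rw [(indepFun_iff_map_prod_eq_prod_map_map hX.aemeasurable hY.aemeasurable).1 hXY,
          Measure.prod_apply hT, lintegral_congr hslice]
    _ = ∫⁻ x in s, μ {ω | q x ≤ Y ω} ∂μ.map X := lintegral_indicator hs _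

lemma measure_le_and_comp_le_of_indepFun [IsFiniteMeasure μ] {f q : ℝ → ℝ} (hX : Measurable X)
    (hY : Measurable Y) (hXY : IndepFun X Y μ) (hf : AEMeasurable f (volume.restrict (Ioi 0)))
    (hlaw : μ.map X = (volume.restrict (Ioi 0)).withDensity fun u => ENNReal.ofReal (f u))
    (hq : AEMeasurable q (volume.restrict (Ioi 0))) (s : ℝ) :
    μ {ω | X ω ≤ s ∧ q (X ω) ≤ Y ω} =
      ∫⁻ u in Ioc 0 s, ENNReal.ofReal (f u) * μ {ω | q u ≤ Y ω} := by
  have hq_map : AEMeasurable q (μ.map X) :=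
    hq.mono_ac (hlaw ▸ withDensity_absolutelyContinuous _ _)
  rw [← Iic_inter_Ioi, ← Measure.restrict_restrict measurableSet_Iic]
  refine (measure_mem_and_comp_le_of_indepFun hX hY hXY hq_map measurableSet_Iic).trans ?_
  rw [hlaw, setLIntegral_withDensity_eq_setLIntegral_mul_non_measurable₀ _
    hf.ennreal_ofReal.restrict _ measurableSet_Iic
    (Filter.Eventually.of_forall fun _ => ENNReal.ofReal_lt_top)]
  rfl

lemma integrableOn_and_measureReal_le_and_comp_le [IsFiniteMeasure μ] {f q : ℝ → ℝ}
    (hX : Measurable X) (hY : Measurable Y) (hXY : IndepFun X Y μ)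
    (hf : AEMeasurable f (volume.restrict (Ioi 0))) (hf_nonneg : ∀ u, 0 < u → 0 ≤ f u)
    (hlaw : μ.map X = (volume.restrict (Ioi 0)).withDensity fun u => ENNReal.ofReal (f u))
    (hq : AEMeasurable q (volume.restrict (Ioi 0))) (s : ℝ) :
    IntegrableOn (fun u => f u * μ.real {ω | q u ≤ Y ω}) (Ioc 0 s) ∧
      μ.real {ω | X ω ≤ s ∧ q (X ω) ≤ Y ω} = ∫ u in Ioc 0 s, f u * μ.real {ω | q u ≤ Y ω} := by
  have hprob := measure_le_and_comp_le_of_indepFun hX hY hXY hf hlaw hq s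
  have hmeas : AEMeasurable (fun u => ENNReal.ofReal (f u) * μ {ω | q u ≤ Y ω})
      (volume.restrict (Ioc 0 s)) :=
    (hf.ennreal_ofReal.mul
      ((antitone_measure_setOf_le μ Y).measurable.comp_aemeasurable hq)).mono_set
        Ioc_subset_Ioi_self
  have htoReal : EqOn (fun u => (ENNReal.ofReal (f u) * μ {ω | q u ≤ Y ω}).toReal)
      (fun u => f u * μ.real {ω | q u ≤ Y ω}) (Ioc 0 s) := fun u hu => by
    simp only [ENNReal.toReal_mul, ENNReal.toReal_ofReal (hf_nonneg u hu.1), measureReal_def]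
  constructor
  · refine IntegrableOn.congr_fun ?_ htoReal measurableSet_Ioc
    exact integrable_toReal_of_lintegral_ne_top hmeas (hprob ▸ measure_ne_top μ _)
  · rw [← setIntegral_congr_fun measurableSet_Ioc htoReal, integral_toReal hmeas
      (Filter.Eventually.of_forall fun _ =>
        ENNReal.mul_lt_top ENNReal.ofReal_lt_top (measure_lt_top μ _)), ← hprob]
    rfl

lemma exists_conditional_density [IsFiniteMeasure μ] {p : Ω → Prop} {d : ℝ → ℝ}
    (hd : ∀ u, 0 < u → 0 < d u) (hd_int : IntegrableOn d (Ioc 0 1))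
    (hprob : ∀ s, 0 ≤ s → μ.real {ω | X ω ≤ s ∧ p ω} = ∫ u in Ioc 0 s, d u) :
    ∃ f : ℝ → ℝ,
      (∀ s, 0 ≤ s → μ.real {ω | X ω ≤ s ∧ p ω} = ∫ u in Ioc 0 s, μ.real {ω | p ω} * f u) ∧
      ∀ u, μ.real {ω | p ω} * f u = d u := by
  have hpos : 0 < μ.real {ω | p ω} := by
    calc 0 < ∫ u in (0 : ℝ)..1, d u := intervalIntegral.intervalIntegral_pos_of_pos_on
          ((intervalIntegrable_iff_integrableOn_Ioc_of_le zero_le_one).2 hd_int)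
          (fun u hu => hd u hu.1) one_pos
      _ = μ.real {ω | X ω ≤ 1 ∧ p ω} := by
          rw [hprob 1 zero_le_one, intervalIntegral.integral_of_le zero_le_one]
      _ ≤ μ.real {ω | p ω} := measureReal_mono fun _ hω => hω.2
  refine ⟨fun u => d u / μ.real {ω | p ω}, ?_, fun u => mul_div_cancel₀ _ hpos.ne'⟩
  simpa only [mul_div_cancel₀ _ hpos.ne'] using hprob

end Probability

section ConnectionDistance

open Set

/-- The probability that a homogeneous Poisson process of intensity `lam` in the plane has no point
within distance `r` of the origin; it is the survival function of the nearest distance. -/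
noncomputable def voidProb (lam r : ℝ) : ℝ := Real.exp (-(Real.pi * lam * r ^ 2))

/-- The density on `(0, ∞)` of the distance from the origin to the nearest point of a homogeneous
Poisson process of intensity `lam`. -/
noncomputable def nearestDistDensity (lam u : ℝ) : ℝ := 2 * Real.pi * lam * u * voidProb lam u

/-- `R` is distributed under `μ` as the distance from the origin to the nearest point of a
homogeneous Poisson process of intensity `lam`, stated through its survival function. -/
structure IsNearestDist {Ω : Type*} [MeasurableSpace Ω] (R : Ω → ℝ) (lam : ℝ) (μ : Measure Ω) :
    Prop where
  measurable : Measurable R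
  nonneg : ∀ ω, 0 ≤ R ω
  measure_setOf_le : ∀ r, 0 ≤ r → μ {ω | r ≤ R ω} = ENNReal.ofReal (voidProb lam r)

lemma voidProb_pos (lam r : ℝ) : 0 < voidProb lam r := Real.exp_pos _

lemma hasDerivAt_voidProb (lam r : ℝ) :
    HasDerivAt (voidProb lam) (-nearestDistDensity lam r) r := by
  refine ((hasDerivAt_pow 2 r).const_mul (Real.pi * lam)).fun_neg.exp.congr_deriv ?_
  simp only [nearestDistDensity, voidProb]
  push_cast
  ring

lemma tendsto_voidProb_atTop {lam : ℝ} (hlam : 0 < lam) :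
    Filter.Tendsto (voidProb lam) Filter.atTop (nhds 0) :=
  Real.tendsto_exp_neg_atTop_nhds_zero.comp <|
    (Filter.tendsto_pow_atTop two_ne_zero).const_mul_atTop (mul_pos Real.pi_pos hlam)

lemma nearestDistDensity_pos {lam u : ℝ} (hlam : 0 < lam) (hu : 0 < u) :
    0 < nearestDistDensity lam u :=
  mul_pos (by positivity) (voidProb_pos lam u)

lemma measurable_nearestDistDensity (lam : ℝ) : Measurable (nearestDistDensity lam) := by
  unfold nearestDistDensity voidProb
  fun_prop

lemma nearestDistDensity_mul_voidProb (l m u r : ℝ) :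
    nearestDistDensity l u * voidProb m r =
      2 * Real.pi * l * u * Real.exp (-(Real.pi * (l * u ^ 2 + m * r ^ 2))) := by
  rw [nearestDistDensity, voidProb, voidProb, mul_assoc _ (Real.exp _), ← Real.exp_add]
  ring_nf

variable {Ω : Type*} [MeasurableSpace Ω] {μ : Measure Ω}

lemma IsNearestDist.measureReal_setOf_le {R : Ω → ℝ} {lam r : ℝ}
    (hR : IsNearestDist R lam μ) (hr : 0 ≤ r) : μ.real {ω | r ≤ R ω} = voidProb lam r := by
  rw [measureReal_def, hR.measure_setOf_le r hr, ENNReal.toReal_ofReal (voidProb_pos lam r).le]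

lemma IsNearestDist.map_eq_withDensity [IsFiniteMeasure μ] {R : Ω → ℝ} {lam : ℝ}
    (hR : IsNearestDist R lam μ) (hlam : 0 < lam) :
    μ.map R = (volume.restrict (Ioi 0)).withDensity
      fun u => ENNReal.ofReal (nearestDistDensity lam u) :=
  map_eq_withDensity_of_hasDerivAt_survival hR.measurable
    (Filter.Eventually.of_forall hR.nonneg) hR.measure_setOf_le
    (fun r _ => hasDerivAt_voidProb lam r) (fun _ hr => (nearestDistDensity_pos hlam hr).le)
    (tendsto_voidProb_atTop hlam)

lemma exists_connection_density [IsFiniteMeasure μ] {X Y : Ω → ℝ} {l m a b : ℝ}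
    {H G Ginv : ℝ → ℝ} (hX : IsNearestDist X l μ) (hY : IsNearestDist Y m μ)
    (hXY : IndepFun X Y μ) (hl : 0 < l) (ha : 0 < a) (hb : 0 < b)
    (hH : IsPathLoss H) (hG : IsPathLoss G) (hGinv : IsPathLossInverse Ginv G) :
    ∃ f : ℝ → ℝ,
      (∀ s, 0 ≤ s → μ.real {ω | X ω ≤ s ∧ b * G (Y ω) ≤ a * H (X ω)} =
        ∫ u in Ioc 0 s, μ.real {ω | b * G (Y ω) ≤ a * H (X ω)} * f u) ∧
      ∀ u, 0 ≤ u → μ.real {ω | b * G (Y ω) ≤ a * H (X ω)} * f u =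
        2 * Real.pi * l * u *
          Real.exp (-(Real.pi * (l * u ^ 2 + m * Ginv (a / b * H u) ^ 2))) := by
  have hevent : ∀ ω, b * G (Y ω) ≤ a * H (X ω) ↔ Ginv (a / b * H (X ω)) ≤ Y ω := fun ω =>
    (hGinv.div_mul_le_iff hG ha hb (hH.pos _ (hX.nonneg ω)) (hY.nonneg ω)).symm
  have hQ_meas : AEMeasurable (fun u => Ginv (a / b * H u)) (volume.restrict (Ioi 0)) :=
    aemeasurable_restrict_of_monotoneOn measurableSet_Ioi
      ((hGinv.monotoneOn_comp hG hH ha hb).mono Ioi_subset_Ici_self)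
  have htail : ∀ u, 0 ≤ u →
      μ.real {ω | Ginv (a / b * H u) ≤ Y ω} = voidProb m (Ginv (a / b * H u)) := fun u hu =>
    hY.measureReal_setOf_le (hGinv.nonneg (mul_pos (div_pos ha hb) (hH.pos u hu)))
  have hjoint := integrableOn_and_measureReal_le_and_comp_le hX.measurable hY.measurable hXY
    (measurable_nearestDistDensity l).aemeasurable
    (fun _ hu => (nearestDistDensity_pos hl hu).le) (hX.map_eq_withDensity hl) hQ_meas
  simp only [hevent]
  obtain ⟨f, hprob, hf⟩ := exists_conditional_density (fun u hu =>
    mul_pos (nearestDistDensity_pos hl hu) (htail u hu.le ▸ voidProb_pos m _)) (hjoint 1).1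
    fun s _ => (hjoint s).2
  exact ⟨f, hprob, fun u hu => by rw [hf, htail u hu, nearestDistDensity_mul_voidProb]⟩

theorem barss_two_tier_connection_distance_general [IsProbabilityMeasure μ]
    {β₁ β₂ P₁ P₂ lam₁ lam₂ : ℝ} (hβ₁ : 0 < β₁) (hβ₂ : 0 < β₂) (hP₁ : 0 < P₁) (hP₂ : 0 < P₂)
    (hlam₁ : 0 < lam₁) (hlam₂ : 0 < lam₂) {G₁ G₂ Ginv₁ Ginv₂ : ℝ → ℝ}
    (hG₁ : IsPathLoss G₁) (hG₂ : IsPathLoss G₂)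
    (hGinv₁ : IsPathLossInverse Ginv₁ G₁) (hGinv₂ : IsPathLossInverse Ginv₂ G₂)
    {Q₂ Q₁ : ℝ → ℝ} (hQ₂ : ∀ u, Q₂ u = Ginv₂ (β₁ * P₁ / (β₂ * P₂) * G₁ u))
    (hQ₁ : ∀ u, Q₁ u = Ginv₁ (β₂ * P₂ / (β₁ * P₁) * G₂ u)) {R₁ R₂ : Ω → ℝ}
    (hR₁ : IsNearestDist R₁ lam₁ μ) (hR₂ : IsNearestDist R₂ lam₂ μ) (hR : IndepFun R₁ R₂ μ)
    {ustar p₁ p₂ : ℝ} (hustar : ustar = Ginv₂ (β₁ * P₁ / (β₂ * P₂) * G₁ 0))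
    (hp₁ : p₁ = μ.real {ω | β₂ * P₂ * G₂ (R₂ ω) ≤ β₁ * P₁ * G₁ (R₁ ω)})
    (hp₂ : p₂ = μ.real {ω | β₁ * P₁ * G₁ (R₁ ω) ≤ β₂ * P₂ * G₂ (R₂ ω)}) :
    (∃ f₁ : ℝ → ℝ,
      (∀ s, 0 ≤ s → μ.real {ω | R₁ ω ≤ s ∧ β₂ * P₂ * G₂ (R₂ ω) ≤ β₁ * P₁ * G₁ (R₁ ω)} =
        ∫ u in Ioc 0 s, p₁ * f₁ u) ∧
      (∀ u, 0 ≤ u → p₁ * f₁ u = 2 * Real.pi * lam₁ * u *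
        Real.exp (-(Real.pi * (lam₁ * u ^ 2 + lam₂ * (Q₂ u) ^ 2))))) ∧
    (∃ f₂ : ℝ → ℝ,
      (∀ s, 0 ≤ s → μ.real {ω | R₂ ω ≤ s ∧ β₁ * P₁ * G₁ (R₁ ω) ≤ β₂ * P₂ * G₂ (R₂ ω)} =
        ∫ u in Ioc 0 s, p₂ * f₂ u) ∧
      (∀ u, 0 ≤ u → u < ustar → p₂ * f₂ u =
        2 * Real.pi * lam₂ * u * Real.exp (-(Real.pi * lam₂ * u ^ 2))) ∧
      (∀ u, ustar ≤ u → p₂ * f₂ u = 2 * Real.pi * lam₂ * u *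
        Real.exp (-(Real.pi * (lam₂ * u ^ 2 + lam₁ * (Q₁ u) ^ 2))))) := by
  have hw₁ : 0 < β₁ * P₁ := mul_pos hβ₁ hP₁
  have hw₂ : 0 < β₂ * P₂ := mul_pos hβ₂ hP₂
  obtain ⟨f₁, hprob₁, hf₁⟩ := exists_connection_density hR₁ hR₂ hR hlam₁ hw₁ hw₂ hG₁ hG₂ hGinv₂
  obtain ⟨f₂, hprob₂, hf₂⟩ :=
    exists_connection_density hR₂ hR₁ hR.symm hlam₂ hw₂ hw₁ hG₂ hG₁ hGinv₁
  simp only [← hp₁, ← hp₂, ← hQ₁, ← hQ₂] at hprob₁ hf₁ hprob₂ hf₂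
  have hustar_nonneg : 0 ≤ ustar :=
    hustar ▸ hGinv₂.nonneg (mul_pos (div_pos hw₁ hw₂) (hG₁.pos 0 le_rfl))
  refine ⟨⟨f₁, hprob₁, hf₁⟩, f₂, hprob₂, fun u hu hlt => ?_,
    fun u hu => hf₂ u (hustar_nonneg.trans hu)⟩
  have hQ₁_zero : Q₁ u = 0 := by
    rw [hQ₁, hGinv₁.eq_zero_of_lt hG₁ hGinv₂ hG₂ hw₁ hw₂ hu (hustar ▸ hlt)]
  rw [hf₂ u hu, hQ₁_zero]
  ring_nf

end ConnectionDistance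

/-- Corollary 2: the two-tier connection-distance densities under the BARSS
policy with homogeneous Poisson deployments; "conditional density" means
`P(R_k ≤ r ∧ A* = k) = ∫₀^r p_k* f_k(u) du` for all `r ≥ 0`. -/
theorem barss_two_tier_connection_distance
    {Ω : Type*} [MeasureSpace Ω] [IsProbabilityMeasure (ℙ : Measure Ω)]
    (β₁ β₂ P₁ P₂ lam₁ lam₂ : ℝ)
    (hβ₁ : 0 < β₁) (hβ₂ : 0 < β₂) (hP₁ : 0 < P₁) (hP₂ : 0 < P₂)
    (hlam₁ : 0 < lam₁) (hlam₂ : 0 < lam₂)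
    (G₁ G₂ : ℝ → ℝ)
    (hG₁cont : ContinuousOn G₁ (Set.Ici 0)) (hG₂cont : ContinuousOn G₂ (Set.Ici 0))
    (hG₁strict : ∀ x y : ℝ, 0 ≤ x → x < y → G₁ y < G₁ x)
    (hG₂strict : ∀ x y : ℝ, 0 ≤ x → x < y → G₂ y < G₂ x)
    (hG₁pos : ∀ x : ℝ, 0 ≤ x → 0 < G₁ x) (hG₂pos : ∀ x : ℝ, 0 ≤ x → 0 < G₂ x)
    (hG₁lim : Filter.Tendsto G₁ Filter.atTop (nhds 0))
    (hG₂lim : Filter.Tendsto G₂ Filter.atTop (nhds 0))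
    (Ginv₁ Ginv₂ : ℝ → ℝ)
    (hGinv₁a : ∀ y : ℝ, 0 < y → y ≤ G₁ 0 →
      Ginv₁ y = sInf {x : ℝ | 0 ≤ x ∧ G₁ x = y})
    (hGinv₁b : ∀ y : ℝ, G₁ 0 < y → Ginv₁ y = 0)
    (hGinv₂a : ∀ y : ℝ, 0 < y → y ≤ G₂ 0 →
      Ginv₂ y = sInf {x : ℝ | 0 ≤ x ∧ G₂ x = y})
    (hGinv₂b : ∀ y : ℝ, G₂ 0 < y → Ginv₂ y = 0)
    (Q₂ Q₁ : ℝ → ℝ)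
    (hQ₂ : ∀ u, Q₂ u = Ginv₂ (β₁ * P₁ / (β₂ * P₂) * G₁ u))
    (hQ₁ : ∀ u, Q₁ u = Ginv₁ (β₂ * P₂ / (β₁ * P₁) * G₂ u))
    (R₁ R₂ : Ω → ℝ)
    (hR₁meas : Measurable R₁) (hR₂meas : Measurable R₂)
    (hRindep : IndepFun R₁ R₂ ℙ)
    (hR₁nn : ∀ ω, 0 ≤ R₁ ω) (hR₂nn : ∀ ω, 0 ≤ R₂ ω)
    (hsurv₁ : ∀ r : ℝ, 0 ≤ r →
      ℙ {ω | r ≤ R₁ ω} = ENNReal.ofReal (Real.exp (-(Real.pi * lam₁ * r ^ 2))))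
    (hsurv₂ : ∀ r : ℝ, 0 ≤ r →
      ℙ {ω | r ≤ R₂ ω} = ENNReal.ofReal (Real.exp (-(Real.pi * lam₂ * r ^ 2))))
    (horder : β₁ * P₁ * G₁ 0 ≤ β₂ * P₂ * G₂ 0)
    (ustar : ℝ) (hustar : ustar = Ginv₂ (β₁ * P₁ / (β₂ * P₂) * G₁ 0))
    (p₁ p₂ : ℝ)
    (hp₁ : p₁ = (ℙ {ω | β₂ * P₂ * G₂ (R₂ ω) ≤ β₁ * P₁ * G₁ (R₁ ω)}).toReal)
    (hp₂ : p₂ = (ℙ {ω | β₁ * P₁ * G₁ (R₁ ω) ≤ β₂ * P₂ * G₂ (R₂ ω)}).toReal) :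
    (∃ f₁ : ℝ → ℝ,
      (∀ s : ℝ, 0 ≤ s →
        (ℙ {ω | R₁ ω ≤ s ∧ β₂ * P₂ * G₂ (R₂ ω) ≤ β₁ * P₁ * G₁ (R₁ ω)}).toReal =
          ∫ u in Set.Ioc (0 : ℝ) s, p₁ * f₁ u) ∧
      (∀ u : ℝ, 0 ≤ u → p₁ * f₁ u =
        2 * Real.pi * lam₁ * u *
          Real.exp (-(Real.pi * (lam₁ * u ^ 2 + lam₂ * (Q₂ u) ^ 2))))) ∧
    (∃ f₂ : ℝ → ℝ,
      (∀ s : ℝ, 0 ≤ s →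
        (ℙ {ω | R₂ ω ≤ s ∧ β₁ * P₁ * G₁ (R₁ ω) ≤ β₂ * P₂ * G₂ (R₂ ω)}).toReal =
          ∫ u in Set.Ioc (0 : ℝ) s, p₂ * f₂ u) ∧
      (∀ u : ℝ, 0 ≤ u → u < ustar → p₂ * f₂ u =
        2 * Real.pi * lam₂ * u * Real.exp (-(Real.pi * lam₂ * u ^ 2))) ∧
      (∀ u : ℝ, ustar ≤ u → p₂ * f₂ u =
        2 * Real.pi * lam₂ * u *
          Real.exp (-(Real.pi * (lam₂ * u ^ 2 + lam₁ * (Q₁ u) ^ 2))))) := by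
  have hanti₁ : StrictAntiOn G₁ (Set.Ici 0) := fun x hx y _ => hG₁strict x y hx
  have hanti₂ : StrictAntiOn G₂ (Set.Ici 0) := fun x hx y _ => hG₂strict x y hx
  exact barss_two_tier_connection_distance_general hβ₁ hβ₂ hP₁ hP₂ hlam₁ hlam₂
    ⟨hG₁cont, hanti₁.antitoneOn, hG₁pos, hG₁lim⟩ ⟨hG₂cont, hanti₂.antitoneOn, hG₂pos, hG₂lim⟩
    ⟨hGinv₁a, hGinv₁b⟩ ⟨hGinv₂a, hGinv₂b⟩ hQ₂ hQ₁
    ⟨hR₁meas, hR₁nn, hsurv₁⟩ ⟨hR₂meas, hR₂nn, hsurv₂⟩ hRindep hustar hp₁ hp₂
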